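/- Time reversal of the Brownian bridge: (H_s)_{s∈[0,T]} is a filtration, the process (B̂_s)_{s∈[0,T)} is adapted to it, has continuous paths, satisfies B̂_0 = 0 ℙ-a.s., and is a Brownian motion with respect to (H_s): for all 0 ≤ s ≤ t < T the increment B̂_t − B̂_s is independent of H_s and is a centered Gaussian vector with covariance (t−s)·Id_{ℝ^ν}. Moreover, ℙ-almost surely, b_{T−s} = y + B̂_s + ∫₀^s (x − b_{T−r})/(T−r) dr for all s ∈ [0,T); that is, the time-reversed process (b_{T−s})_{s∈[0,T]} is a semimartingale realization of the Brownian bridge from y to x in time T driven by the Brownian motion B̂. -/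

import Mathlib

open MeasureTheory ProbabilityTheory

/-- A `ν`-dimensional Brownian motion `B` on a filtered probability space
`(Ω, m, (ℱ_t), P)` satisfying the usual conditions: the filtration is complete and
right-continuous, `B` has continuous paths on `[0,∞)` with `B_0 = 0`, `B` is adapted, and
for `0 ≤ s ≤ t` the increment `B_t − B_s` is independent of `ℱ_s` and is a centered
Gaussian vector with covariance matrix `(t−s)·Id` (componentwise iid `N(0, t−s)`). -/
structure IsBrownianMotion {Ω : Type*} [m : MeasurableSpace Ω] (P : Measure Ω) (ν : ℕ)
    (F : Filtration ℝ m) (B : ℝ → Ω → Fin ν → ℝ) : Prop where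
  complete : ∀ (t : ℝ) (A : Set Ω), P A = 0 → MeasurableSet[F t] A
  rightCont : ∀ t : ℝ, (F t : MeasurableSpace Ω) = ⨅ s ∈ Set.Ioi t, (F s : MeasurableSpace Ω)
  contPaths : ∀ ω : Ω, ContinuousOn (fun t => B t ω) (Set.Ici 0)
  start : ∀ ω : Ω, B 0 ω = 0
  adapted : ∀ t : ℝ, Measurable[F t] (B t)
  indepIncr : ∀ s t : ℝ, 0 ≤ s → s ≤ t →
    Indep (MeasurableSpace.comap (fun ω => B t ω - B s ω) inferInstance) (F s) P
  gaussIncr : ∀ s t : ℝ, 0 ≤ s → s ≤ t →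
    Measure.map (fun ω => B t ω - B s ω) P =
      Measure.pi fun _ : Fin ν => gaussianReal 0 (Real.toNNReal (t - s))

/-- The Brownian bridge from `x` to `y` in time `T` driven by the path `B`:
`b_t = (t/T)y + ((T−t)/T)x + B_t − (T−t)∫₀ᵗ (T−s)⁻² B_s ds` for `t < T`, and `b_t = y`
otherwise (in particular `b_T = y`). -/
noncomputable def bridgeBB (ν : ℕ) (T : ℝ) (x y : Fin ν → ℝ) (B : ℝ → Fin ν → ℝ)
    (t : ℝ) : Fin ν → ℝ :=
  if t < T then
    (t / T) • y + ((T - t) / T) • x + B t -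
      (T - t) • ∫ s in (0 : ℝ)..t, ((T - s) ^ 2)⁻¹ • B s
  else y

/-- The process `B̂_s = b_{T−s} − y + ∫_{T−s}^{T} (b_r − x)/r dr` obtained by time reversal
of the Brownian bridge. -/
noncomputable def bridgeHatB (ν : ℕ) (T : ℝ) (x y : Fin ν → ℝ) (B : ℝ → Fin ν → ℝ)
    (s : ℝ) : Fin ν → ℝ :=
  bridgeBB ν T x y B (T - s) - y +
    ∫ r in (T - s)..T, r⁻¹ • (bridgeBB ν T x y B r - x)

/-- `H_s`: the smallest σ-algebra containing all `P`-null sets together with the σ-algebra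
generated by the random vector `b_{T−s}` and the increments `B_T − B_r`, `r ∈ [T−s,T]`. -/
noncomputable def revFiltration {Ω : Type*} [MeasurableSpace Ω] (P : Measure Ω) (ν : ℕ)
    (T : ℝ) (x y : Fin ν → ℝ) (B : ℝ → Ω → Fin ν → ℝ) (s : ℝ) : MeasurableSpace Ω :=
  MeasurableSpace.comap (fun ω => bridgeBB ν T x y (fun u => B u ω) (T - s)) inferInstance ⊔
    (⨆ r ∈ Set.Icc (T - s) T,
      MeasurableSpace.comap (fun ω => B T ω - B r ω) inferInstance) ⊔
    MeasurableSpace.generateFrom {A : Set Ω | P A = 0}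

section aux
open Filter Topology

lemma aux_indep_sup {Ω : Type*} {m : MeasurableSpace Ω} {P : Measure Ω} [IsProbabilityMeasure P]
    {A₁ A₂ G : MeasurableSpace Ω} (h1 : A₁ ≤ m) (h2 : A₂ ≤ m) (hG : G ≤ m)
    (hA : Indep A₁ G P) (hB : Indep A₂ (A₁ ⊔ G) P) : Indep (A₁ ⊔ A₂) G P := by
  have key : (A₁ ⊔ A₂) = MeasurableSpace.generateFrom
      {u | ∃ s t, MeasurableSet[A₁] s ∧ MeasurableSet[A₂] t ∧ s ∩ t = u} := by
    apply le_antisymm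
    · refine sup_le ?_ ?_
      · intro s hs
        exact MeasurableSpace.measurableSet_generateFrom
          ⟨s, Set.univ, hs, MeasurableSet.univ, by simp⟩
      · intro s hs
        exact MeasurableSpace.measurableSet_generateFrom
          ⟨Set.univ, s, MeasurableSet.univ, hs, by simp⟩
    · refine MeasurableSpace.generateFrom_le ?_
      rintro u ⟨s, t, hs, ht, rfl⟩
      exact MeasurableSet.inter ((le_sup_left : A₁ ≤ A₁ ⊔ A₂) _ hs)
        ((le_sup_right : A₂ ≤ A₁ ⊔ A₂) _ ht)
  refine IndepSets.indep (p2 := {s | MeasurableSet[G] s}) (sup_le h1 h2) hG ?_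
    (@MeasurableSpace.isPiSystem_measurableSet _ G) key
    (@MeasurableSpace.generateFrom_measurableSet _ G).symm ?_
  · rintro u ⟨s, t, hs, ht, rfl⟩ u' ⟨s', t', hs', ht', rfl⟩ _
    exact ⟨s ∩ s', t ∩ t', hs.inter hs', ht.inter ht', by ext; simp; tauto⟩
  · rw [IndepSets_iff]
    rintro u g ⟨s, t, hs, ht, rfl⟩ hg
    rw [Indep_iff] at hA hB
    have hsg : MeasurableSet[A₁ ⊔ G] (s ∩ g) := MeasurableSet.inter
      ((le_sup_left : A₁ ≤ A₁ ⊔ G) _ hs) ((le_sup_right : G ≤ A₁ ⊔ G) _ hg)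
    have e1 := hB t (s ∩ g) ht hsg
    have e2 := hB t s ht ((le_sup_left : A₁ ≤ A₁ ⊔ G) _ hs)
    have e3 := hA s g hs hg
    have : s ∩ t ∩ g = t ∩ (s ∩ g) := by ext; simp; tauto
    rw [this, e1, e3, Set.inter_comm s t, e2, mul_assoc]

lemma aux_indep_null {Ω : Type*} {m : MeasurableSpace Ω} {P : Measure Ω} [IsProbabilityMeasure P]
    (hN : MeasurableSpace.generateFrom {A : Set Ω | P A = 0} ≤ m)
    {G : MeasurableSpace Ω} (hG : G ≤ m) :
    Indep (MeasurableSpace.generateFrom {A : Set Ω | P A = 0}) G P := by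
  refine IndepSets.indep (p2 := {s | MeasurableSet[G] s}) hN hG ?_
    (@MeasurableSpace.isPiSystem_measurableSet _ G) rfl
    (@MeasurableSpace.generateFrom_measurableSet _ G).symm ?_
  · intro s hs t ht _
    exact measure_mono_null Set.inter_subset_left hs
  · rw [IndepSets_iff]
    intro s g hs hg
    rw [show P s = 0 from hs, zero_mul]
    exact measure_mono_null Set.inter_subset_left hs

/-- Riemann sums. -/
lemma aux_riemann {E : Type*} [NormedAddCommGroup E] [NormedSpace ℝ E] [CompleteSpace E]
    {a b : ℝ} (hab : a ≤ b) (Φ : ℝ → ℝ → E)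
    (hΦ : ContinuousOn (fun p : ℝ × ℝ => Φ p.1 p.2) (Set.Icc a b ×ˢ Set.Icc a b)) :
    Tendsto (fun n : ℕ => ∑ k ∈ Finset.range (n + 1), ((b - a) / (n + 1 : ℝ)) •
      Φ (a + k * ((b - a) / (n + 1 : ℝ))) (a + (k + 1 : ℕ) * ((b - a) / (n + 1 : ℝ)))) atTop
      (𝓝 (∫ s in a..b, Φ s s)) := by
  have hcomp : IsCompact (Set.Icc a b ×ˢ Set.Icc a b) := isCompact_Icc.prod isCompact_Icc
  have huc := hcomp.uniformContinuousOn_of_continuous hΦ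
  rw [Metric.uniformContinuousOn_iff] at huc
  have hdiag : ContinuousOn (fun s => Φ s s) (Set.Icc a b) := by
    refine hΦ.comp (f := fun s : ℝ => (s, s)) (by fun_prop) ?_
    intro s hs
    exact ⟨hs, hs⟩
  rw [Metric.tendsto_atTop]
  intro ε hε
  obtain ⟨δ, hδ, hδ'⟩ := huc (ε / (b - a + 1)) (by have : 0 < b - a + 1 := by linarith
                                                   positivity)
  obtain ⟨N, hN⟩ := exists_nat_gt ((b - a) / δ)
  refine ⟨N, fun n hn => ?_⟩
  have hn1 : (0 : ℝ) < n + 1 := by positivity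
  set h : ℝ := (b - a) / (n + 1 : ℝ) with hh
  have hh0 : 0 ≤ h := div_nonneg (by linarith) hn1.le
  have hnh : (n + 1 : ℝ) * h = b - a := by rw [hh]; field_simp
  have hhδ : h < δ := by
    rw [hh, div_lt_iff₀ hn1]
    rw [div_lt_iff₀ hδ] at hN
    have : (N : ℝ) ≤ n := by exact_mod_cast hn
    nlinarith
  have hmem : ∀ k : ℕ, k ≤ n + 1 → a + k * h ∈ Set.Icc a b := by
    intro k hk
    have : (k : ℝ) ≤ n + 1 := by exact_mod_cast hk
    refine ⟨by nlinarith [mul_nonneg (Nat.cast_nonneg (α := ℝ) k) hh0], by nlinarith⟩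
  have hsub : ∀ k : ℕ, k < n + 1 → Set.Icc (a + k * h) (a + (k + 1 : ℕ) * h) ⊆ Set.Icc a b := by
    intro k hk
    exact Set.Icc_subset_Icc (hmem k hk.le).1 (hmem (k + 1) hk).2
  have hle : ∀ k : ℕ, a + k * h ≤ a + (k + 1 : ℕ) * h := by
    intro k; push_cast; nlinarith
  have hint : ∀ k < n + 1, IntervalIntegrable (fun s => Φ s s) volume
      (a + k * h) (a + (k + 1 : ℕ) * h) := by
    intro k hk
    apply ContinuousOn.intervalIntegrable
    rw [Set.uIcc_of_le (hle k)]
    exact hdiag.mono (hsub k hk)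
  have hsum := intervalIntegral.sum_integral_adjacent_intervals (a := fun k : ℕ => a + k * h)
    (n := n + 1) hint
  have hend : a + ((n + 1 : ℕ) : ℝ) * h = b := by push_cast; linarith
  simp only [hend] at hsum
  simp only [Nat.cast_zero, zero_mul, add_zero] at hsum
  rw [← hsum, dist_eq_norm, ← Finset.sum_sub_distrib]
  have hb : ∀ k ∈ Finset.range (n + 1), ‖h • Φ (a + k * h) (a + (k + 1 : ℕ) * h) -
      ∫ s in (a + k * h)..(a + (k + 1 : ℕ) * h), Φ s s‖ ≤ ε / (b - a + 1) * h := by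
    intro k hk
    have hk := Finset.mem_range.1 hk
    have e : h • Φ (a + k * h) (a + (k + 1 : ℕ) * h) =
        ∫ s in (a + k * h)..(a + (k + 1 : ℕ) * h), Φ (a + k * h) (a + (k + 1 : ℕ) * h) := by
      rw [intervalIntegral.integral_const]
      congr 1; push_cast; ring
    rw [e, ← intervalIntegral.integral_sub (by simp) (hint k hk)]
    have := intervalIntegral.norm_integral_le_of_norm_le_const (C := ε / (b - a + 1))
      (a := a + k * h) (b := a + (k + 1 : ℕ) * h)
      (f := fun s => Φ (a + k * h) (a + (k + 1 : ℕ) * h) - Φ s s) ?_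
    · refine this.trans (le_of_eq ?_)
      rw [abs_of_nonneg (by linarith [hle k])]
      push_cast; ring
    · intro s hs
      rw [Set.uIoc_of_le (hle k)] at hs
      rw [← dist_eq_norm]
      have hs2 := hs.2
      push_cast at hs2
      refine (hδ' (a + k * h, a + (k + 1 : ℕ) * h) ⟨hmem k hk.le, hmem (k + 1) hk⟩ (s, s)
        ⟨hsub k hk ⟨hs.1.le, hs.2⟩, hsub k hk ⟨hs.1.le, hs.2⟩⟩ ?_).le
      rw [Prod.dist_eq]
      refine max_lt ?_ ?_ <;> simp only [Real.dist_eq] <;> rw [abs_lt] <;> push_cast <;>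
        constructor <;> nlinarith [hs.1]
  refine lt_of_le_of_lt ((norm_sum_le _ _).trans (Finset.sum_le_sum hb)) ?_
  rw [Finset.sum_const, Finset.card_range, nsmul_eq_mul]
  push_cast
  have hpos : 0 < b - a + 1 := by linarith
  have : (n + 1 : ℝ) * (ε / (b - a + 1) * h) = ε * ((b - a) / (b - a + 1)) := by
    rw [← hnh]; ring
  rw [this]
  have : (b - a) / (b - a + 1) < 1 := by rw [div_lt_one hpos]; linarith
  nlinarith

lemma aux_meas_int {Ω : Type*} [MeasurableSpace Ω] {ν : ℕ} {a b : ℝ} (hab : a ≤ b)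
    (f : ℝ → Ω → Fin ν → ℝ) (hm : ∀ r ∈ Set.Icc a b, Measurable (f r))
    (hc : ∀ ω, ContinuousOn (fun r => f r ω) (Set.Icc a b)) :
    Measurable (fun ω => ∫ r in a..b, f r ω) := by
  refine measurable_of_tendsto_metrizable
    (f := fun (n : ℕ) ω => ∑ k ∈ Finset.range (n + 1), ((b - a) / (n + 1 : ℝ)) •
      f (a + (k + 1 : ℕ) * ((b - a) / (n + 1 : ℝ))) ω) ?_ ?_
  · intro n
    refine Finset.measurable_sum _ fun k hk => ?_
    have hk := Finset.mem_range.1 hk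
    suffices hmem : a + (k + 1 : ℕ) * ((b - a) / (n + 1 : ℝ)) ∈ Set.Icc a b from
      (hm _ hmem).const_smul ((b - a) / (n + 1 : ℝ))
    have hn1 : (0 : ℝ) < n + 1 := by positivity
    set h : ℝ := (b - a) / (n + 1 : ℝ) with hh
    have hh0 : 0 ≤ h := div_nonneg (by linarith) hn1.le
    have hnh : (n + 1 : ℝ) * h = b - a := by rw [hh]; field_simp
    have : ((k + 1 : ℕ) : ℝ) ≤ n + 1 := by exact_mod_cast hk
    have h2 := mul_le_mul_of_nonneg_right this hh0
    have h3 : 0 ≤ ((k + 1 : ℕ) : ℝ) * h := by positivity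
    exact ⟨by linarith, by linarith⟩
  · rw [tendsto_pi_nhds]
    intro ω
    refine aux_riemann hab (fun _ q => f q ω) ?_
    refine (hc ω).comp (f := fun p : ℝ × ℝ => p.2) (by fun_prop) ?_
    intro p hp
    exact hp.2

end aux

section auxB
open Filter Topology

lemma aux_cont_smul {α : Type*} [TopologicalSpace α] {ν : ℕ} {f : α → ℝ} {g : α → Fin ν → ℝ}
    {S : Set α} (hf : ContinuousOn f S) (hg : ContinuousOn g S) :
    ContinuousOn (fun a => f a • g a) S := hf.smul hg

noncomputable def auxMM (ν : ℕ) (T : ℝ) (β : ℝ → Fin ν → ℝ) (r : ℝ) : Fin ν → ℝ :=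
  (T - r)⁻¹ • β r - ∫ s in (0 : ℝ)..r, ((T - s) ^ 2)⁻¹ • β s

lemma aux_bb_eq {ν : ℕ} {T : ℝ} {x y : Fin ν → ℝ} {β : ℝ → Fin ν → ℝ} {t : ℝ} (ht : t < T) :
    bridgeBB ν T x y β t = (t / T) • y + ((T - t) / T) • x + (T - t) • auxMM ν T β t := by
  have : T - t ≠ 0 := by linarith
  rw [bridgeBB, if_pos ht, auxMM, smul_sub, smul_smul, mul_inv_cancel₀ this, one_smul]
  abel

lemma aux_bb_T {ν : ℕ} {T : ℝ} {x y : Fin ν → ℝ} {β : ℝ → Fin ν → ℝ} :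
    bridgeBB ν T x y β T = y := by simp [bridgeBB]

lemma aux_int_g {T u v : ℝ} (huv : u ≤ v) (hv : v < T) :
    ∫ s in u..v, ((T - s) ^ 2)⁻¹ = (T - v)⁻¹ - (T - u)⁻¹ := by
  have hne : ∀ s ∈ Set.uIcc u v, T - s ≠ 0 := by
    intro s hs
    rw [Set.uIcc_of_le huv] at hs
    have := hs.2
    linarith
  refine intervalIntegral.integral_eq_sub_of_hasDerivAt (f := fun s => (T - s)⁻¹) ?_ ?_
  · intro s hs
    have h := ((hasDerivAt_id s).const_sub T).inv (hne s hs)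
    have e : (fun s : ℝ => (T - s)⁻¹) = (fun x => T - id x)⁻¹ := rfl
    rw [e]
    have h2 : ((T - s) ^ 2)⁻¹ = -(-1) / (T - id s) ^ 2 := by simp
    rw [h2]
    exact h
  · apply ContinuousOn.intervalIntegrable
    refine ContinuousOn.inv₀ (by fun_prop) ?_
    intro s hs
    exact pow_ne_zero 2 (hne s hs)

lemma aux_cont_g {ν : ℕ} {T u v : ℝ} {β : ℝ → Fin ν → ℝ} (hβ : ContinuousOn β (Set.Ici 0))
    (hu : 0 ≤ u) (hv : v < T) :
    ContinuousOn (fun s => ((T - s) ^ 2)⁻¹ • β s) (Set.Icc u v) := by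
  refine aux_cont_smul ?_ (hβ.mono ?_)
  · refine ContinuousOn.inv₀ (by fun_prop) ?_
    intro s hs
    have := hs.2
    exact pow_ne_zero 2 (by linarith)
  · intro s hs
    exact hu.trans hs.1

lemma aux_MM_sub {ν : ℕ} {T u v : ℝ} {β : ℝ → Fin ν → ℝ} (hβ : ContinuousOn β (Set.Ici 0))
    (hu : 0 ≤ u) (huv : u ≤ v) (hv : v < T) :
    auxMM ν T β v - auxMM ν T β u =
      (T - v)⁻¹ • β v - (T - u)⁻¹ • β u - ∫ s in u..v, ((T - s) ^ 2)⁻¹ • β s := by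
  have h1 : IntervalIntegrable (fun s => ((T - s) ^ 2)⁻¹ • β s) volume 0 u := by
    apply ContinuousOn.intervalIntegrable
    rw [Set.uIcc_of_le hu]
    exact aux_cont_g hβ le_rfl (by linarith)
  have h2 : IntervalIntegrable (fun s => ((T - s) ^ 2)⁻¹ • β s) volume u v := by
    apply ContinuousOn.intervalIntegrable
    rw [Set.uIcc_of_le huv]
    exact aux_cont_g hβ hu (by linarith)
  rw [auxMM, auxMM, ← intervalIntegral.integral_add_adjacent_intervals h1 h2]
  abel

lemma aux_MM_sub' {ν : ℕ} {T u v : ℝ} {β : ℝ → Fin ν → ℝ} (hβ : ContinuousOn β (Set.Ici 0))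
    (hu : 0 ≤ u) (huv : u ≤ v) (hv : v < T) (c : Fin ν → ℝ) :
    auxMM ν T β v - auxMM ν T β u =
      (T - v)⁻¹ • (β v - c) - (T - u)⁻¹ • (β u - c)
        - ∫ s in u..v, ((T - s) ^ 2)⁻¹ • (β s - c) := by
  have h2 : IntervalIntegrable (fun s => ((T - s) ^ 2)⁻¹ • β s) volume u v := by
    apply ContinuousOn.intervalIntegrable
    rw [Set.uIcc_of_le huv]
    exact aux_cont_g hβ hu (by linarith)
  have h3 : IntervalIntegrable (fun s => ((T - s) ^ 2)⁻¹ • c) volume u v := by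
    apply ContinuousOn.intervalIntegrable
    rw [Set.uIcc_of_le huv]
    exact aux_cont_g (β := fun _ => c) continuousOn_const hu (by linarith)
  rw [aux_MM_sub hβ hu huv hv]
  simp only [smul_sub]
  rw [intervalIntegral.integral_sub h2 h3, intervalIntegral.integral_smul_const,
    aux_int_g huv hv, sub_smul]
  abel

lemma aux_MM_cont {ν : ℕ} {T : ℝ} {β : ℝ → Fin ν → ℝ} (hβ : ContinuousOn β (Set.Ici 0)) :
    ContinuousOn (auxMM ν T β) (Set.Ico 0 T) := by
  intro t ht
  obtain ⟨v, htv, hvT⟩ := exists_between ht.2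
  have hc : ContinuousOn (auxMM ν T β) (Set.Icc 0 v) := by
    unfold auxMM
    refine ContinuousOn.sub (aux_cont_smul ?_
      (hβ.mono Set.Icc_subset_Ici_self)) ?_
    · refine ContinuousOn.inv₀ (by fun_prop) ?_
      intro s hs
      have := hs.2
      linarith
    · have h0v : (0 : ℝ) ≤ v := ht.1.trans htv.le
      have := intervalIntegral.continuousOn_primitive_interval (μ := volume)
        (f := fun s => ((T - s) ^ 2)⁻¹ • β s) (a := 0) (b := v) ?_
      · rwa [Set.uIcc_of_le h0v] at this
      · rw [Set.uIcc_of_le h0v]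
        exact (aux_cont_g hβ le_rfl hvT).integrableOn_Icc
  have := hc t ⟨ht.1, htv.le⟩
  refine this.mono_of_mem_nhdsWithin ?_
  rw [mem_nhdsWithin]
  exact ⟨Set.Iio v, isOpen_Iio, htv, fun s hs => ⟨hs.2.1, le_of_lt hs.1⟩⟩

lemma aux_bb_cont {ν : ℕ} {T : ℝ} (hT : 0 < T) {x y : Fin ν → ℝ} {β : ℝ → Fin ν → ℝ}
    (hβ : ContinuousOn β (Set.Ici 0)) :
    ContinuousOn (bridgeBB ν T x y β) (Set.Icc 0 T) := by
  intro t ht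
  rcases lt_or_eq_of_le ht.2 with htT | rfl
  · have h1 : ContinuousOn (bridgeBB ν T x y β) (Set.Ico 0 T) := by
      have := aux_MM_cont (T := T) hβ
      have h2 : ContinuousOn (fun t => (t / T) • y + ((T - t) / T) • x + (T - t) • auxMM ν T β t)
        (Set.Ico 0 T) := by fun_prop
      exact h2.congr fun s hs => aux_bb_eq hs.2
    refine (h1 t ⟨ht.1, htT⟩).mono_of_mem_nhdsWithin ?_
    rw [mem_nhdsWithin]
    exact ⟨Set.Iio T, isOpen_Iio, htT, fun s hs => ⟨hs.2.1, hs.1⟩⟩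
  · -- limit at `T`
    rw [Metric.continuousWithinAt_iff]
    intro ε hε
    rw [aux_bb_T]
    obtain ⟨δ, hδ, hδ'⟩ := Metric.continuousWithinAt_iff.1 (hβ t hT.le) (ε / 4) (by positivity)
    set u : ℝ := max 0 (t - δ / 2) with hu
    have hu0 : 0 ≤ u := le_max_left _ _
    have huT : u < t := max_lt hT (by linarith)
    have huδ : t - δ / 2 ≤ u := le_max_right _ _
    -- for v in [u, t)
    set C : Fin ν → ℝ := (- (t : ℝ)⁻¹) • y + (t : ℝ)⁻¹ • x + auxMM ν t β u
      + (t - u)⁻¹ • (β t - β u) with hC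
    have hclose : ∀ s ∈ Set.Icc u t, ‖β s - β t‖ ≤ ε / 4 := by
      intro s hs
      rw [← dist_eq_norm]
      refine (hδ' (hu0.trans hs.1) ?_).le
      rw [Real.dist_eq, abs_lt]
      constructor <;> linarith [hs.1, hs.2]
    refine ⟨min (t - u) (ε / (4 * (‖C‖ + 1))), lt_min (by linarith) (by positivity), ?_⟩
    intro v hv hvd
    rcases lt_or_eq_of_le hv.2 with hvT | rfl
    swap
    · rw [aux_bb_T, dist_self]; exact hε
    rw [Real.dist_eq, abs_sub_comm, abs_of_pos (by linarith)] at hvd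
    have hvu : u < v := by linarith [hvd.trans_le (min_le_left _ _)]
    have hvC : (t - v) * ‖C‖ ≤ ε / 4 := by
      have h1 := hvd.trans_le (min_le_right _ _)
      rw [lt_div_iff₀ (by positivity)] at h1
      nlinarith [norm_nonneg C]
    have htv : 0 < t - v := by linarith
    have hM := aux_MM_sub' hβ hu0 hvu.le hvT (β t)
    have hI : ‖∫ s in u..v, ((t - s) ^ 2)⁻¹ • (β s - β t)‖ ≤ ε / 4 * (t - v)⁻¹ := by
      have h1 : ‖∫ s in u..v, ((t - s) ^ 2)⁻¹ • (β s - β t)‖ ≤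
          ∫ s in u..v, ((t - s) ^ 2)⁻¹ * (ε / 4) := by
        refine intervalIntegral.norm_integral_le_of_norm_le hvu.le ?_ ?_
        · refine Eventually.of_forall fun s hs => ?_
          rw [norm_smul, Real.norm_of_nonneg (by positivity)]
          exact mul_le_mul_of_nonneg_left (hclose s ⟨hs.1.le, hs.2.trans hvT.le⟩) (by positivity)
        · apply ContinuousOn.intervalIntegrable
          rw [Set.uIcc_of_le hvu.le]
          refine ContinuousOn.mul (ContinuousOn.inv₀ (by fun_prop) ?_) continuousOn_const
          intro s hs
          have := hs.2
          exact pow_ne_zero 2 (by linarith)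
      rw [intervalIntegral.integral_mul_const, aux_int_g hvu.le hvT] at h1
      have : 0 < (t - u)⁻¹ := by rw [inv_pos]; linarith
      nlinarith
    have heq : bridgeBB ν t x y β v - y = (t - v) • C + (β v - β t)
        - (t - v) • ∫ s in u..v, ((t - s) ^ 2)⁻¹ • (β s - β t) := by
      rw [aux_bb_eq hvT, hC, ← sub_add_cancel (auxMM ν t β v) (auxMM ν t β u), hM]
      have h1 : t ≠ 0 := hT.ne'
      have h2 : t - v ≠ 0 := htv.ne'
      ext i
      simp only [Pi.add_apply, Pi.sub_apply, Pi.smul_apply, smul_eq_mul]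
      generalize (∫ s in u..v, ((t - s) ^ 2)⁻¹ • (β s - β t)) i = J
      generalize (t - u)⁻¹ = k
      field_simp
      ring
    rw [dist_eq_norm, heq]
    have n1 : ‖(t - v) • C‖ ≤ ε / 4 := by
      rw [norm_smul, Real.norm_of_nonneg htv.le]; exact hvC
    have n2 := hclose v ⟨hvu.le, hvT.le⟩
    have n3 : ‖(t - v) • ∫ s in u..v, ((t - s) ^ 2)⁻¹ • (β s - β t)‖ ≤ ε / 4 := by
      rw [norm_smul, Real.norm_of_nonneg htv.le]
      calc _ ≤ (t - v) * (ε / 4 * (t - v)⁻¹) := mul_le_mul_of_nonneg_left hI htv.le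
        _ = ε / 4 := by field_simp
    refine lt_of_le_of_lt ((norm_sub_le _ _).trans (add_le_add (norm_add_le _ _) le_rfl)) ?_
    linarith

lemma aux_abel {E : Type*} [AddCommGroup E] [Module ℝ E] (g : ℕ → ℝ) (β : ℕ → E) (N : ℕ) :
    ∑ k ∈ Finset.range N, g k • (β (k + 1) - β k) = g N • β N - g 0 • β 0 -
      ∑ k ∈ Finset.range N, (g (k + 1) - g k) • β (k + 1) := by
  induction N with
  | zero => simp
  | succ n ih =>
    rw [Finset.sum_range_succ, ih, Finset.sum_range_succ, smul_sub, sub_smul]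
    abel

/-- Riemann-Stieltjes approximations of the increments of `auxMM`. -/
lemma aux_MM_riemann {ν : ℕ} {T u v : ℝ} {β : ℝ → Fin ν → ℝ} (hβ : ContinuousOn β (Set.Ici 0))
    (hu : 0 ≤ u) (huv : u ≤ v) (hv : v < T) :
    Tendsto (fun n : ℕ => ∑ k ∈ Finset.range (n + 1),
      (T - (u + k * ((v - u) / (n + 1 : ℝ))))⁻¹ •
        (β (u + (k + 1 : ℕ) * ((v - u) / (n + 1 : ℝ))) - β (u + k * ((v - u) / (n + 1 : ℝ)))))
      atTop (𝓝 (auxMM ν T β v - auxMM ν T β u)) := by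
  have hR := aux_riemann huv (fun p q => ((T - p) * (T - q))⁻¹ • β q) ?_
  · rw [aux_MM_sub hβ hu huv hv]
    have e : ∀ s : ℝ, ((T - s) ^ 2)⁻¹ • β s = ((T - s) * (T - s))⁻¹ • β s := by
      intro s; rw [sq]
    simp only [e]
    refine (tendsto_const_nhds.sub hR).congr fun n => ?_
    have hn1 : (0 : ℝ) < n + 1 := by positivity
    set h : ℝ := (v - u) / (n + 1 : ℝ) with hh
    have hh0 : 0 ≤ h := div_nonneg (by linarith) hn1.le
    have hnh : (n + 1 : ℝ) * h = v - u := by rw [hh]; field_simp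
    rw [aux_abel (fun k : ℕ => (T - (u + k * h))⁻¹) (fun k : ℕ => β (u + k * h))]
    have hend : u + ((n + 1 : ℕ) : ℝ) * h = v := by push_cast; linarith
    simp only [hend]
    simp only [Nat.cast_zero, zero_mul, add_zero]
    congr 1
    refine Finset.sum_congr rfl fun k hk => ?_
    have hk : ((k + 1 : ℕ) : ℝ) ≤ n + 1 := by exact_mod_cast Finset.mem_range.1 hk
    have hkh := mul_le_mul_of_nonneg_right hk hh0
    push_cast at hkh ⊢
    have h1 : T - (u + k * h) ≠ 0 := by nlinarith
    have h2 : T - (u + (k + 1) * h) ≠ 0 := by nlinarith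
    rw [smul_smul]
    congr 1
    have h3 : h = (T - (u + k * h)) - (T - (u + (k + 1) * h)) := by ring
    generalize T - (u + k * h) = p at *
    generalize T - (u + (k + 1) * h) = q at *
    rw [h3]
    field_simp
  · refine aux_cont_smul ?_ ?_
    · refine ContinuousOn.inv₀ (by fun_prop) ?_
      rintro ⟨p, q⟩ ⟨hp, hq⟩
      have h1 := hp.2
      have h2 := hq.2
      simp only at h1 h2
      exact mul_ne_zero (by linarith) (by linarith)
    · refine hβ.comp (f := fun p : ℝ × ℝ => p.2) (by fun_prop) ?_
      rintro ⟨p, q⟩ ⟨hp, hq⟩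
      exact hu.trans hq.1

/-- Riemann approximations of the increments of the reversed Brownian motion. -/
lemma aux_hat_riemann {ν : ℕ} {T w u : ℝ} (hT : 0 < T) {x y : Fin ν → ℝ} {β : ℝ → Fin ν → ℝ}
    (hβ : ContinuousOn β (Set.Ici 0)) (hw : 0 < w) (hwu : w ≤ u) (hu : u < T) :
    Tendsto (fun n : ℕ => ∑ k ∈ Finset.range (n + 1),
      ((T - (w + k * ((u - w) / (n + 1 : ℝ)))) • auxMM ν T β (w + k * ((u - w) / (n + 1 : ℝ)))
      - ((w + k * ((u - w) / (n + 1 : ℝ))) / (w + (k + 1 : ℕ) * ((u - w) / (n + 1 : ℝ))) *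
        (T - (w + (k + 1 : ℕ) * ((u - w) / (n + 1 : ℝ))))) •
        auxMM ν T β (w + (k + 1 : ℕ) * ((u - w) / (n + 1 : ℝ)))))
      atTop (𝓝 (bridgeBB ν T x y β w - bridgeBB ν T x y β u +
        ∫ r in w..u, r⁻¹ • (bridgeBB ν T x y β r - x))) := by
  have hR := aux_riemann hwu (fun _ q => q⁻¹ • (bridgeBB ν T x y β q - x)) ?_
  · refine (tendsto_const_nhds.add hR).congr fun n => ?_
    have hn1 : (0 : ℝ) < n + 1 := by positivity
    set h : ℝ := (u - w) / (n + 1 : ℝ) with hh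
    have hh0 : 0 ≤ h := div_nonneg (by linarith) hn1.le
    have hnh : (n + 1 : ℝ) * h = u - w := by rw [hh]; field_simp
    have htel := Finset.sum_range_sub' (fun k : ℕ => bridgeBB ν T x y β (w + k * h)) (n + 1)
    have hend : w + ((n + 1 : ℕ) : ℝ) * h = u := by push_cast; linarith
    simp only [hend] at htel
    simp only [Nat.cast_zero, zero_mul, add_zero] at htel
    rw [← htel, ← Finset.sum_add_distrib]
    refine Finset.sum_congr rfl fun k hk => ?_
    have hk : ((k + 1 : ℕ) : ℝ) ≤ n + 1 := by exact_mod_cast Finset.mem_range.1 hk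
    have hkh := mul_le_mul_of_nonneg_right hk hh0
    have hkh0 : 0 ≤ k * h := by positivity
    have h1 : w + k * h < T := by push_cast at hkh; nlinarith
    have h2 : w + (k + 1 : ℕ) * h < T := by nlinarith
    have h3 : 0 < w + (k + 1 : ℕ) * h := by positivity
    rw [aux_bb_eq h1, aux_bb_eq h2]
    generalize auxMM ν T β (w + k * h) = M1
    generalize auxMM ν T β (w + (k + 1 : ℕ) * h) = M2
    ext i
    simp only [Pi.add_apply, Pi.sub_apply, Pi.smul_apply, smul_eq_mul]
    push_cast at h3 ⊢
    field_simp
    ring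
  · refine aux_cont_smul ?_ ?_
    · refine ContinuousOn.inv₀ (by fun_prop) ?_
      rintro ⟨p, q⟩ ⟨hp, hq⟩
      have h1 := hq.1
      simp only at h1
      simp only; linarith
    · refine ContinuousOn.sub ((aux_bb_cont hT hβ).comp (f := fun p : ℝ × ℝ => p.2)
        (by fun_prop) ?_) continuousOn_const
      rintro ⟨p, q⟩ ⟨hp, hq⟩
      exact ⟨hw.le.trans hq.1, hq.2.trans hu.le⟩

lemma aux_hat_int {ν : ℕ} {T w u : ℝ} (hT : 0 < T) {x y : Fin ν → ℝ} {β : ℝ → Fin ν → ℝ}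
    (hβ : ContinuousOn β (Set.Ici 0)) (hw : 0 < w) (hu : u ≤ T) :
    ContinuousOn (fun r => r⁻¹ • (bridgeBB ν T x y β r - x)) (Set.Icc w u) := by
  refine aux_cont_smul ?_ ?_
  · refine ContinuousOn.inv₀ (by fun_prop) ?_
    intro r hr
    exact (hw.trans_le hr.1).ne'
  · refine ContinuousOn.sub ((aux_bb_cont hT hβ).mono ?_) continuousOn_const
    exact Set.Icc_subset_Icc hw.le hu

lemma aux_hat_sub {ν : ℕ} {T s t : ℝ} (hT : 0 < T) {x y : Fin ν → ℝ} {β : ℝ → Fin ν → ℝ}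
    (hβ : ContinuousOn β (Set.Ici 0)) (hs : 0 ≤ s) (hst : s ≤ t) (ht : t < T) :
    bridgeHatB ν T x y β t - bridgeHatB ν T x y β s =
      bridgeBB ν T x y β (T - t) - bridgeBB ν T x y β (T - s) +
        ∫ r in (T - t)..(T - s), r⁻¹ • (bridgeBB ν T x y β r - x) := by
  have h1 : IntervalIntegrable (fun r => r⁻¹ • (bridgeBB ν T x y β r - x)) volume
      (T - t) (T - s) := by
    apply ContinuousOn.intervalIntegrable
    rw [Set.uIcc_of_le (by linarith)]
    exact aux_hat_int hT hβ (by linarith) (by linarith)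
  have h2 : IntervalIntegrable (fun r => r⁻¹ • (bridgeBB ν T x y β r - x)) volume
      (T - s) T := by
    apply ContinuousOn.intervalIntegrable
    rw [Set.uIcc_of_le (by linarith)]
    exact aux_hat_int hT hβ (by linarith) (by linarith)
  rw [bridgeHatB, bridgeHatB, ← intervalIntegral.integral_add_adjacent_intervals h1 h2]
  abel

lemma aux_hat_cont {ν : ℕ} {T : ℝ} (hT : 0 < T) {x y : Fin ν → ℝ} {β : ℝ → Fin ν → ℝ}
    (hβ : ContinuousOn β (Set.Ici 0)) :
    ContinuousOn (bridgeHatB ν T x y β) (Set.Ico 0 T) := by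
  intro t ht
  obtain ⟨v, htv, hvT⟩ := exists_between ht.2
  have hc : ContinuousOn (bridgeHatB ν T x y β) (Set.Icc 0 v) := by
    unfold bridgeHatB
    have hmaps : Set.MapsTo (fun s => T - s) (Set.Icc 0 v) (Set.Icc (T - v) T) :=
      fun s hs => ⟨by linarith [hs.2], by linarith [hs.1]⟩
    refine ContinuousOn.add (ContinuousOn.sub ((aux_bb_cont hT hβ).comp
      (f := fun s => T - s) (by fun_prop) ?_) continuousOn_const) ?_
    · intro s hs
      exact ⟨by linarith [hs.2], by linarith [hs.1]⟩
    · have := intervalIntegral.continuousOn_primitive_interval_left (μ := volume)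
        (f := fun r => r⁻¹ • (bridgeBB ν T x y β r - x)) (a := T - v) (b := T) ?_
      · rw [Set.uIcc_of_le (by linarith [ht.1])] at this
        exact this.comp (f := fun s => T - s) (by fun_prop) hmaps
      · rw [Set.uIcc_of_le (by linarith [ht.1])]
        exact (aux_hat_int hT hβ (by linarith) le_rfl).integrableOn_Icc
  have := hc t ⟨ht.1, htv.le⟩
  refine this.mono_of_mem_nhdsWithin ?_
  rw [mem_nhdsWithin]
  exact ⟨Set.Iio v, isOpen_Iio, htv, fun s hs => ⟨hs.2.1, le_of_lt hs.1⟩⟩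

lemma aux_hat_sde {ν : ℕ} {T s : ℝ} {x y : Fin ν → ℝ} {β : ℝ → Fin ν → ℝ} :
    bridgeBB ν T x y β (T - s) = y + bridgeHatB ν T x y β s +
      ∫ r in (0 : ℝ)..s, (T - r)⁻¹ • (x - bridgeBB ν T x y β (T - r)) := by
  have h := intervalIntegral.integral_comp_sub_left (a := 0) (b := s)
    (fun r => r⁻¹ • (x - bridgeBB ν T x y β r)) T
  have e : ∀ r : ℝ, r⁻¹ • (x - bridgeBB ν T x y β r) = - (r⁻¹ • (bridgeBB ν T x y β r - x)) := by
    intro r; rw [← smul_neg, neg_sub]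
  rw [h, bridgeHatB, sub_zero]
  simp only [e]
  rw [intervalIntegral.integral_neg]
  abel

end auxB

section auxC
open Filter Topology

noncomputable def auxe (z : ℝ) : ℂ := Complex.exp (z * Complex.I)

lemma auxe_add (a b : ℝ) : auxe (a + b) = auxe a * auxe b := by
  simp only [auxe]; rw [← Complex.exp_add]; push_cast; ring_nf

lemma auxe_cont : Continuous auxe := by unfold auxe; fun_prop

lemma auxe_norm (a : ℝ) : ‖auxe a‖ = 1 := Complex.norm_exp_ofReal_mul_I a

noncomputable def auxq {ν : ℕ} (L : StrongDual ℝ (Fin ν → ℝ)) : ℝ := ∑ i, (L (Pi.single i 1)) ^ 2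

lemma aux_pi_cf {ν : ℕ} (v : NNReal) (L : StrongDual ℝ (Fin ν → ℝ)) :
    charFunDual (Measure.pi fun _ : Fin ν => gaussianReal 0 v) L =
      Complex.exp ((-(v * auxq L / 2) : ℝ)) := by
  rw [charFunDual_pi]
  have : ∀ i, charFunDual (gaussianReal 0 v) (L ∘SL ContinuousLinearMap.single ℝ (fun _ => ℝ) i) =
      Complex.exp ((-(v * (L (Pi.single i 1)) ^ 2 / 2) : ℝ)) := by
    intro i
    have h1 : charFunDual (gaussianReal 0 v)
        (L ∘SL ContinuousLinearMap.single ℝ (fun _ => ℝ) i) =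
        charFun (gaussianReal 0 v) (L (Pi.single i 1)) := by
      rw [charFunDual_apply, charFun_apply_real]
      congr 1
      ext z
      congr 2
      have : (L ∘SL ContinuousLinearMap.single ℝ (fun _ => ℝ) i) z =
          z * L (Pi.single i 1) := by
        have e : z = z • (1 : ℝ) := by simp
        conv_lhs => rw [e, map_smul]
        simp
      rw [this]; push_cast; ring
    rw [h1, charFun_gaussianReal]
    congr 1
    push_cast; ring
  simp only [this]
  rw [← Complex.exp_sum]
  congr 1
  rw [← Complex.ofReal_sum]
  congr 1
  rw [auxq, Finset.sum_neg_distrib, ← Finset.sum_div, ← Finset.mul_sum]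

lemma aux_tendsto_cf {Ω : Type*} [MeasurableSpace Ω] {P : Measure Ω} [IsProbabilityMeasure P]
    {X : ℕ → Ω → ℝ} {Y : Ω → ℝ} {Z : Ω → ℂ} (hX : ∀ n, Measurable (X n)) (hZ : Measurable Z)
    (hZ1 : ∀ ω, ‖Z ω‖ ≤ 1) (h : ∀ ω, Tendsto (fun n => X n ω) atTop (𝓝 (Y ω))) :
    Tendsto (fun n => ∫ ω, auxe (X n ω) * Z ω ∂P) atTop (𝓝 (∫ ω, auxe (Y ω) * Z ω ∂P)) := by
  refine tendsto_integral_of_dominated_convergence (fun _ => (1 : ℝ)) ?_ (by simp) ?_ ?_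
  · intro n
    exact ((auxe_cont.measurable.comp (hX n)).mul hZ).aestronglyMeasurable
  · intro n
    refine Eventually.of_forall fun ω => ?_
    rw [norm_mul, auxe_norm, one_mul]
    exact hZ1 ω
  · refine Eventually.of_forall fun ω => ?_
    exact ((auxe_cont.tendsto _).comp (h ω)).mul_const _

variable {Ω : Type*} [m : MeasurableSpace Ω] {P : Measure Ω} [IsProbabilityMeasure P] {ν : ℕ}
  {F : Filtration ℝ m} {B : ℝ → Ω → Fin ν → ℝ}

lemma aux_B_meas (hB : IsBrownianMotion P ν F B) {r u : ℝ} (h : r ≤ u) :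
    Measurable[F u] (B r) := (hB.adapted r).mono (F.mono h) le_rfl

lemma aux_B_meas' (hB : IsBrownianMotion P ν F B) (r : ℝ) : Measurable (B r) :=
  (hB.adapted r).mono (F.le r) le_rfl

lemma aux_incr (hB : IsBrownianMotion P ν F B) {s t : ℝ} (hs : 0 ≤ s) (hst : s ≤ t)
    {Z : Ω → ℂ} (hZ : Measurable[F s] Z) (L : StrongDual ℝ (Fin ν → ℝ)) :
    ∫ ω, auxe (L (B t ω - B s ω)) * Z ω ∂P =
      Complex.exp ((-((t - s) * auxq L / 2) : ℝ)) * ∫ ω, Z ω ∂P := by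
  have hm : Measurable (fun ω => B t ω - B s ω) := (aux_B_meas' hB t).sub (aux_B_meas' hB s)
  have hme : Measurable (fun z : Fin ν → ℝ => auxe (L z)) := by
    have := auxe_cont
    fun_prop
  have hind : IndepFun (fun ω => auxe (L (B t ω - B s ω))) Z P := by
    rw [IndepFun_iff_Indep]
    refine indep_of_indep_of_le_left (indep_of_indep_of_le_right (hB.indepIncr s t hs hst)
      hZ.comap_le) ?_
    have : (fun ω => auxe (L (B t ω - B s ω))) = (fun z => auxe (L z)) ∘ (fun ω => B t ω - B s ω) :=
      rfl
    rw [this, ← MeasurableSpace.comap_comp]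
    exact MeasurableSpace.comap_mono hme.comap_le
  rw [hind.integral_fun_mul_eq_mul_integral (hme.comp hm).aestronglyMeasurable
    (hZ.mono (F.le s) le_rfl).aestronglyMeasurable]
  congr 1
  have h1 := aux_pi_cf (Real.toNNReal (t - s)) L
  rw [← hB.gaussIncr s t hs hst, charFunDual_apply, integral_map hm.aemeasurable
    (by have := L.continuous; exact (Continuous.aestronglyMeasurable (by fun_prop))),
    Real.coe_toNNReal _ (by linarith)] at h1
  exact h1

lemma aux_incr_sum (hB : IsBrownianMotion P ν F B) (r : ℕ → ℝ) (hr : Monotone r) (hr0 : 0 ≤ r 0)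
    {Z : Ω → ℂ} (hZ : Measurable[F (r 0)] Z) (g : ℕ → ℝ) (L : StrongDual ℝ (Fin ν → ℝ)) (N : ℕ) :
    ∫ ω, auxe (L (∑ k ∈ Finset.range N, g k • (B (r (k + 1)) ω - B (r k) ω))) * Z ω ∂P =
      Complex.exp ((-((∑ k ∈ Finset.range N, (r (k + 1) - r k) * (g k) ^ 2) * auxq L / 2) : ℝ)) *
        ∫ ω, Z ω ∂P := by
  induction N with
  | zero => simp [auxe]
  | succ n ih =>
    have e1 : ∀ ω, auxe (L (∑ k ∈ Finset.range (n + 1), g k • (B (r (k + 1)) ω - B (r k) ω))) * Z ω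
        = auxe ((g n • L) (B (r (n + 1)) ω - B (r n) ω)) *
          (auxe (L (∑ k ∈ Finset.range n, g k • (B (r (k + 1)) ω - B (r k) ω))) * Z ω) := by
      intro ω
      rw [Finset.sum_range_succ, map_add, add_comm, auxe_add, map_smul]
      simp [mul_assoc]
    simp only [e1]
    rw [aux_incr hB (hr0.trans (hr (Nat.zero_le n))) (hr (Nat.le_succ n)) ?_, ih, ← mul_assoc,
      ← Complex.exp_add]
    · congr 2
      rw [Finset.sum_range_succ]
      have : auxq (g n • L) = (g n) ^ 2 * auxq L := by
        simp [auxq, Finset.mul_sum, mul_pow]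
      rw [this]; push_cast; ring
    · refine Measurable.mul ?_ (hZ.mono (F.mono (hr (Nat.zero_le n))) le_rfl)
      refine auxe_cont.measurable.comp (L.continuous.measurable.comp ?_)
      refine Finset.measurable_sum _ fun k hk => ?_
      have hk := Finset.mem_range.1 hk
      exact ((aux_B_meas hB (hr hk)).sub (aux_B_meas hB (hr hk.le))).const_smul (g k)

lemma aux_MM_meas (hB : IsBrownianMotion P ν F B) {T u : ℝ} (hu : 0 ≤ u) (huT : u < T) :
    Measurable[F u] (fun ω => auxMM ν T (fun r => B r ω) u) := by
  unfold auxMM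
  refine Measurable.sub ((hB.adapted u).const_smul ((T - u)⁻¹)) ?_
  refine @aux_meas_int Ω (F u) ν 0 u hu (fun s ω => ((T - s) ^ 2)⁻¹ • B s ω) ?_ ?_
  · intro r hr
    exact (aux_B_meas hB hr.2).const_smul (((T - r) ^ 2)⁻¹)
  · intro ω
    exact aux_cont_g (hB.contPaths ω) le_rfl huT

lemma aux_MM_incr (hB : IsBrownianMotion P ν F B) {T u v : ℝ} (hu : 0 ≤ u) (huv : u ≤ v)
    (hv : v < T) {Z : Ω → ℂ} (hZ : Measurable[F u] Z) (hZ1 : ∀ ω, ‖Z ω‖ ≤ 1)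
    (L : StrongDual ℝ (Fin ν → ℝ)) :
    ∫ ω, auxe (L (auxMM ν T (fun r => B r ω) v - auxMM ν T (fun r => B r ω) u)) * Z ω ∂P =
      Complex.exp ((-(((T - v)⁻¹ - (T - u)⁻¹) * auxq L / 2) : ℝ)) * ∫ ω, Z ω ∂P := by
  have hlim := aux_tendsto_cf (P := P) (Z := Z)
    (X := fun (n : ℕ) ω => L (∑ k ∈ Finset.range (n + 1),
      (T - (u + k * ((v - u) / (n + 1 : ℝ))))⁻¹ •
        (B (u + (k + 1 : ℕ) * ((v - u) / (n + 1 : ℝ))) ω - B (u + k * ((v - u) / (n + 1 : ℝ))) ω)))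
    (Y := fun ω => L (auxMM ν T (fun r => B r ω) v - auxMM ν T (fun r => B r ω) u)) ?_
    (hZ.mono (F.le u) le_rfl) hZ1 ?_
  rotate_left
  · intro n
    refine L.continuous.measurable.comp (Finset.measurable_sum _ fun k hk => ?_)
    exact ((aux_B_meas' hB _).sub (aux_B_meas' hB _)).const_smul
      ((T - (u + k * ((v - u) / (n + 1 : ℝ))))⁻¹)
  · intro ω
    exact (L.continuous.tendsto _).comp (aux_MM_riemann (hB.contPaths ω) hu huv hv)
  refine tendsto_nhds_unique hlim ?_
  have hR := aux_riemann huv (fun p _ => ((T - p)⁻¹) ^ 2) ?_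
  swap
  · refine ContinuousOn.pow (ContinuousOn.inv₀ (by fun_prop) ?_) 2
    rintro ⟨p, q⟩ ⟨hp, hq⟩
    have h1 := hp.2
    simp only at h1
    simp only; linarith
  have hI : ∫ s in u..v, ((T - s)⁻¹) ^ 2 = (T - v)⁻¹ - (T - u)⁻¹ := by
    rw [← aux_int_g huv hv]; simp only [inv_pow]
  rw [hI] at hR
  have hc : Continuous (fun z : ℝ => Complex.exp ((-(z * auxq L / 2) : ℝ)) * ∫ ω, Z ω ∂P) := by
    fun_prop
  refine ((hc.tendsto _).comp hR).congr fun n => ?_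
  have hn1 : (0 : ℝ) < n + 1 := by positivity
  have hh0 : 0 ≤ (v - u) / (n + 1 : ℝ) := div_nonneg (by linarith) hn1.le
  have := aux_incr_sum hB (fun k : ℕ => u + k * ((v - u) / (n + 1 : ℝ))) ?_ ?_ (Z := Z) ?_
    (fun k : ℕ => (T - (u + k * ((v - u) / (n + 1 : ℝ))))⁻¹) L (n + 1)
  · rw [this]
    simp only [Function.comp]
    congr 6
    refine Finset.sum_congr rfl fun k hk => ?_
    push_cast
    rw [smul_eq_mul]
    ring
  · intro i j hij
    have : (i : ℝ) ≤ j := by exact_mod_cast hij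
    have := mul_le_mul_of_nonneg_right this hh0
    simp only; linarith
  · simpa using hu
  · exact hZ.mono (F.mono (by simp)) le_rfl

lemma aux_MM_zero (hB : IsBrownianMotion P ν F B) (T : ℝ) (ω : Ω) :
    auxMM ν T (fun r => B r ω) 0 = 0 := by
  simp [auxMM, hB.start ω]

/-- Joint characteristic function of the discretized reversed increments. -/
lemma aux_discrete (hB : IsBrownianMotion P ν F B) {T : ℝ} (hT : 0 < T) (r : ℕ → ℝ)
    (hr : Monotone r) (hr0 : 0 < r 0) (L : StrongDual ℝ (Fin ν → ℝ)) (N : ℕ) (hN : r N < T)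
    (L' : StrongDual ℝ (Fin ν → ℝ)) :
    ∫ ω, auxe (L (∑ k ∈ Finset.range N, ((T - r k) • auxMM ν T (fun t => B t ω) (r k) -
        (r k / r (k + 1) * (T - r (k + 1))) • auxMM ν T (fun t => B t ω) (r (k + 1)))) +
        L' (auxMM ν T (fun t => B t ω) (r N))) ∂P =
      Complex.exp ((-(((∑ k ∈ Finset.range N, (r (k + 1) - r k) * (r k / r (k + 1))) * auxq L +
        ((T - r N)⁻¹ - T⁻¹) * auxq L') / 2) : ℝ)) := by
  induction N generalizing L' with
  | zero =>
    have := aux_MM_incr hB le_rfl hr0.le hN (Z := fun _ => 1) measurable_const (by simp) L'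
    simp only [aux_MM_zero hB, sub_zero, mul_one] at this
    simp only [Finset.range_zero, Finset.sum_empty, map_zero, zero_add, zero_mul]
    rw [this]; simp
  | succ n ih =>
    have hn : r n < T := (hr (Nat.le_succ n)).trans_lt hN
    have hrn : 0 < r n := hr0.trans_le (hr (Nat.zero_le n))
    have hrn1 : 0 < r (n + 1) := hr0.trans_le (hr (Nat.zero_le _))
    set c : ℝ := r n / r (n + 1) * (T - r (n + 1)) with hc
    have e1 : ∀ ω, auxe (L (∑ k ∈ Finset.range (n + 1),
        ((T - r k) • auxMM ν T (fun t => B t ω) (r k) -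
        (r k / r (k + 1) * (T - r (k + 1))) • auxMM ν T (fun t => B t ω) (r (k + 1)))) +
        L' (auxMM ν T (fun t => B t ω) (r (n + 1)))) =
        auxe ((L' - c • L) (auxMM ν T (fun t => B t ω) (r (n + 1)) -
          auxMM ν T (fun t => B t ω) (r n))) *
        auxe (L (∑ k ∈ Finset.range n, ((T - r k) • auxMM ν T (fun t => B t ω) (r k) -
        (r k / r (k + 1) * (T - r (k + 1))) • auxMM ν T (fun t => B t ω) (r (k + 1)))) +
        ((T - r n - c) • L + L') (auxMM ν T (fun t => B t ω) (r n))) := by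
      intro ω
      rw [← auxe_add, Finset.sum_range_succ, ← hc]
      congr 1
      simp only [map_add, map_sub, map_smul, ContinuousLinearMap.sub_apply,
        ContinuousLinearMap.add_apply, ContinuousLinearMap.smul_apply, smul_eq_mul]
      ring
    simp only [e1]
    rw [aux_MM_incr hB hrn.le (hr (Nat.le_succ n)) hN ?_ (fun ω => (auxe_norm _).le), ih hn,
      ← Complex.exp_add]
    · congr 1
      rw [← Complex.ofReal_add]
      congr 1
      rw [Finset.sum_range_succ]
      have key : ((T - r (n + 1))⁻¹ - (T - r n)⁻¹) * auxq (L' - c • L) +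
          ((T - r n)⁻¹ - T⁻¹) * auxq ((T - r n - c) • L + L') =
          (r (n + 1) - r n) * (r n / r (n + 1)) * auxq L +
          ((T - r (n + 1))⁻¹ - T⁻¹) * auxq L' := by
        simp only [auxq, Finset.mul_sum, ← Finset.sum_add_distrib]
        refine Finset.sum_congr rfl fun i _ => ?_
        simp only [ContinuousLinearMap.sub_apply,
          ContinuousLinearMap.add_apply, ContinuousLinearMap.smul_apply, smul_eq_mul]
        generalize L (Pi.single i 1) = a
        generalize L' (Pi.single i 1) = b
        rw [hc]
        have h1 : T - r n ≠ 0 := by linarith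
        have h2 : T - r (n + 1) ≠ 0 := by linarith
        generalize r n = p at *
        generalize r (n + 1) = q at *
        field_simp
        ring
      linear_combination (-1 / 2 : ℝ) * key
    · refine auxe_cont.measurable.comp (Measurable.add (L.continuous.measurable.comp ?_)
        (((T - r n - c) • L + L').continuous.measurable.comp (aux_MM_meas hB hrn.le hn)))
      refine Finset.measurable_sum _ fun k hk => ?_
      have hk := Finset.mem_range.1 hk
      have hmk : ∀ j ≤ n, Measurable[F (r n)] (fun ω => auxMM ν T (fun t => B t ω) (r j)) := by
        intro j hj
        exact (aux_MM_meas hB (hr0.le.trans (hr (Nat.zero_le j)))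
          ((hr hj).trans_lt hn)).mono (F.mono (hr hj)) le_rfl
      exact ((hmk k hk.le).const_smul (T - r k)).sub
        ((hmk (k + 1) hk).const_smul (r k / r (k + 1) * (T - r (k + 1))))

/-- Joint characteristic function of the reversed increments and the bridge. -/
lemma aux_joint (hB : IsBrownianMotion P ν F B) {T : ℝ} (hT : 0 < T) (x y : Fin ν → ℝ) {w u : ℝ}
    (hw : 0 < w) (hwu : w ≤ u) (hu : u < T) (L L' : StrongDual ℝ (Fin ν → ℝ)) :
    ∫ ω, auxe (L (bridgeBB ν T x y (fun t => B t ω) w - bridgeBB ν T x y (fun t => B t ω) u +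
        ∫ r in w..u, r⁻¹ • (bridgeBB ν T x y (fun t => B t ω) r - x)) +
        L' (auxMM ν T (fun t => B t ω) u)) ∂P =
      Complex.exp ((-(((u - w) * auxq L + ((T - u)⁻¹ - T⁻¹) * auxq L') / 2) : ℝ)) := by
  have hmem : ∀ (n k : ℕ), k ≤ n + 1 →
      w + k * ((u - w) / (n + 1 : ℝ)) ∈ Set.Icc w u := by
    intro n k hk
    have hn1 : (0 : ℝ) < n + 1 := by positivity
    have hh0 : 0 ≤ (u - w) / (n + 1 : ℝ) := div_nonneg (by linarith) hn1.le
    have hnh : (n + 1 : ℝ) * ((u - w) / (n + 1 : ℝ)) = u - w := by field_simp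
    have : (k : ℝ) ≤ n + 1 := by exact_mod_cast hk
    have h2 := mul_le_mul_of_nonneg_right this hh0
    have h3 : 0 ≤ (k : ℝ) * ((u - w) / (n + 1 : ℝ)) := by positivity
    exact ⟨by linarith, by linarith⟩
  have hend : ∀ n : ℕ, w + ((n + 1 : ℕ) : ℝ) * ((u - w) / (n + 1 : ℝ)) = u := by
    intro n
    have hn1 : (0 : ℝ) < n + 1 := by positivity
    push_cast; field_simp; ring
  have hlim := aux_tendsto_cf (P := P) (Z := fun _ => 1)
    (X := fun (n : ℕ) ω => L (∑ k ∈ Finset.range (n + 1),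
      ((T - (w + k * ((u - w) / (n + 1 : ℝ)))) •
        auxMM ν T (fun t => B t ω) (w + k * ((u - w) / (n + 1 : ℝ)))
      - ((w + k * ((u - w) / (n + 1 : ℝ))) / (w + (k + 1 : ℕ) * ((u - w) / (n + 1 : ℝ))) *
        (T - (w + (k + 1 : ℕ) * ((u - w) / (n + 1 : ℝ))))) •
        auxMM ν T (fun t => B t ω) (w + (k + 1 : ℕ) * ((u - w) / (n + 1 : ℝ))))) +
        L' (auxMM ν T (fun t => B t ω) u))
    (Y := fun ω => L (bridgeBB ν T x y (fun t => B t ω) w - bridgeBB ν T x y (fun t => B t ω) u +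
        ∫ r in w..u, r⁻¹ • (bridgeBB ν T x y (fun t => B t ω) r - x)) +
        L' (auxMM ν T (fun t => B t ω) u)) ?_
    measurable_const (by simp) ?_
  rotate_left
  · intro n
    have hM : ∀ q ∈ Set.Icc w u, Measurable (fun ω => auxMM ν T (fun t => B t ω) q) :=
      fun q hq => (aux_MM_meas hB (hw.le.trans hq.1) (hq.2.trans_lt hu)).mono (F.le q) le_rfl
    refine Measurable.add (L.continuous.measurable.comp (Finset.measurable_sum _ fun k hk => ?_))
      (L'.continuous.measurable.comp (hM u ⟨hwu, le_rfl⟩))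
    have hk := Finset.mem_range.1 hk
    exact ((hM _ (hmem n k hk.le)).const_smul (T - (w + k * ((u - w) / (n + 1 : ℝ))))).sub
      ((hM _ (hmem n (k + 1) hk)).const_smul
      ((w + k * ((u - w) / (n + 1 : ℝ))) / (w + (k + 1 : ℕ) * ((u - w) / (n + 1 : ℝ))) *
        (T - (w + (k + 1 : ℕ) * ((u - w) / (n + 1 : ℝ))))))
  · intro ω
    exact ((L.continuous.tendsto _).comp
      (aux_hat_riemann hT (hB.contPaths ω) hw hwu hu)).add_const _
  simp only [mul_one] at hlim
  refine tendsto_nhds_unique hlim ?_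
  have hR := aux_riemann hwu (fun p q => p / q) ?_
  swap
  · refine ContinuousOn.div (by fun_prop) (by fun_prop) ?_
    rintro ⟨p, q⟩ ⟨hp, hq⟩
    have h1 := hq.1
    simp only at h1
    simp only; linarith
  have hI : ∫ s in w..u, s / s = u - w := by
    rw [intervalIntegral.integral_congr (g := fun _ => (1 : ℝ))]
    · simp
    · intro s hs
      rw [Set.uIcc_of_le hwu] at hs
      exact div_self (hw.trans_le hs.1).ne'
  rw [hI] at hR
  have hc : Continuous (fun z : ℝ => Complex.exp
      ((-((z * auxq L + ((T - u)⁻¹ - T⁻¹) * auxq L') / 2) : ℝ))) := by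
    fun_prop
  refine ((hc.tendsto _).comp hR).congr fun n => ?_
  have hn1 : (0 : ℝ) < n + 1 := by positivity
  have hh0 : 0 ≤ (u - w) / (n + 1 : ℝ) := div_nonneg (by linarith) hn1.le
  have := aux_discrete hB hT (fun k : ℕ => w + k * ((u - w) / (n + 1 : ℝ))) ?_ ?_ L (n + 1) ?_ L'
  · simp only [hend] at this
    rw [this]
    simp only [Function.comp]
    congr 6
    refine Finset.sum_congr rfl fun k hk => ?_
    push_cast
    rw [smul_eq_mul]
    ring
  · intro i j hij
    have : (i : ℝ) ≤ j := by exact_mod_cast hij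
    have := mul_le_mul_of_nonneg_right this hh0
    simp only; linarith
  · simpa using hw
  · simp only [hend]; exact hu

end auxC

section auxE
open Filter Topology

variable {Ω : Type*} [m : MeasurableSpace Ω] {P : Measure Ω} [IsProbabilityMeasure P] {ν : ℕ}
  {F : Filtration ℝ m} {B : ℝ → Ω → Fin ν → ℝ}

lemma aux_bb_meas (hB : IsBrownianMotion P ν F B) {T r : ℝ} (x y : Fin ν → ℝ)
    (hr : 0 ≤ r) (hrT : r ≤ T) :
    Measurable[F r] (fun ω => bridgeBB ν T x y (fun u => B u ω) r) := by
  rcases lt_or_eq_of_le hrT with h | rfl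
  · simp only [aux_bb_eq h]
    exact measurable_const.add ((aux_MM_meas hB hr h).const_smul (T - r))
  · simp only [aux_bb_T]
    exact measurable_const

lemma aux_D_meas (hB : IsBrownianMotion P ν F B) {T s t : ℝ} (hT : 0 < T) (x y : Fin ν → ℝ)
    (hs : 0 ≤ s) (hst : s ≤ t) (ht : t < T) :
    Measurable[F (T - s)] (fun ω => bridgeHatB ν T x y (fun u => B u ω) t -
      bridgeHatB ν T x y (fun u => B u ω) s) := by
  have hb : ∀ r ∈ Set.Icc (T - t) (T - s),
      Measurable[F (T - s)] (fun ω => bridgeBB ν T x y (fun u => B u ω) r) := fun r hr =>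
    (aux_bb_meas hB x y (by linarith [hr.1]) (by linarith [hr.2])).mono (F.mono hr.2) le_rfl
  have e : ∀ ω, _ = _ := fun ω => aux_hat_sub hT (x := x) (y := y) (hB.contPaths ω) hs hst ht
  simp only [e]
  refine ((hb _ ⟨le_rfl, by linarith⟩).sub (hb _ ⟨by linarith, le_rfl⟩)).add ?_
  refine @aux_meas_int Ω (F (T - s)) ν _ _ (by linarith) _ ?_ ?_
  · intro r hr
    exact ((hb r hr).sub measurable_const).const_smul (r⁻¹)
  · intro ω
    exact aux_hat_int hT (hB.contPaths ω) (by linarith) (by linarith)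

lemma aux_law_of_cf {D : Ω → Fin ν → ℝ} (hD : Measurable D) {c : ℝ} (hc : 0 ≤ c)
    (h : ∀ L : StrongDual ℝ (Fin ν → ℝ),
      ∫ ω, auxe (L (D ω)) ∂P = Complex.exp ((-(c * auxq L / 2) : ℝ))) :
    Measure.map D P = Measure.pi fun _ : Fin ν => gaussianReal 0 (Real.toNNReal c) := by
  have := Measure.isProbabilityMeasure_map (μ := P) hD.aemeasurable
  refine Measure.ext_of_charFunDual ?_
  ext L
  rw [aux_pi_cf, charFunDual_apply, integral_map hD.aemeasurable
    (by have := L.continuous; exact (Continuous.aestronglyMeasurable (by fun_prop))),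
    Real.coe_toNNReal _ hc]
  exact h L

lemma aux_indep_of_cf {D M : Ω → Fin ν → ℝ} (hD : Measurable D) (hM : Measurable M)
    (h : ∀ L L' : StrongDual ℝ (Fin ν → ℝ),
      ∫ ω, auxe (L (D ω) + L' (M ω)) ∂P = (∫ ω, auxe (L (D ω)) ∂P) * ∫ ω, auxe (L' (M ω)) ∂P) :
    IndepFun D M P := by
  rw [indepFun_iff_charFunDual_prod hD.aemeasurable hM.aemeasurable]
  intro L
  rw [charFunDual_apply, charFunDual_apply, charFunDual_apply,
    integral_map (hD.prodMk hM).aemeasurable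
      (by have := L.continuous; exact (Continuous.aestronglyMeasurable (by fun_prop))),
    integral_map hD.aemeasurable (Continuous.aestronglyMeasurable (by fun_prop)),
    integral_map hM.aemeasurable (Continuous.aestronglyMeasurable (by fun_prop))]
  have := h (L.comp (.inl ℝ _ _)) (L.comp (.inr ℝ _ _))
  have e : ∀ ω, (L.comp (.inl ℝ (Fin ν → ℝ) (Fin ν → ℝ))) (D ω) +
      (L.comp (.inr ℝ (Fin ν → ℝ) (Fin ν → ℝ))) (M ω) = L (D ω, M ω) := by
    intro ω
    simp only [ContinuousLinearMap.comp_apply, ← map_add]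
    simp
  simp only [e] at this
  exact this

lemma aux_hat_law_pos (hB : IsBrownianMotion P ν F B) {T s t : ℝ} (hT : 0 < T) (x y : Fin ν → ℝ)
    (hs : 0 < s) (hst : s ≤ t) (ht : t < T) (L L' : StrongDual ℝ (Fin ν → ℝ)) :
    ∫ ω, auxe (L (bridgeHatB ν T x y (fun u => B u ω) t - bridgeHatB ν T x y (fun u => B u ω) s) +
      L' (auxMM ν T (fun u => B u ω) (T - s))) ∂P =
    Complex.exp ((-(((t - s) * auxq L + ((T - (T - s))⁻¹ - T⁻¹) * auxq L') / 2) : ℝ)) := by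
  have e : ∀ ω, _ = _ := fun ω => aux_hat_sub hT (x := x) (y := y) (hB.contPaths ω) hs.le hst ht
  simp only [e]
  rw [aux_joint hB hT x y (by linarith) (by linarith) (by linarith)]
  congr 3
  ring

lemma aux_hat_cf (hB : IsBrownianMotion P ν F B) {T s t : ℝ} (hT : 0 < T) (x y : Fin ν → ℝ)
    (hs : 0 ≤ s) (hst : s ≤ t) (ht : t < T) (L : StrongDual ℝ (Fin ν → ℝ)) :
    ∫ ω, auxe (L (bridgeHatB ν T x y (fun u => B u ω) t -
      bridgeHatB ν T x y (fun u => B u ω) s)) ∂P =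
    Complex.exp ((-((t - s) * auxq L / 2) : ℝ)) := by
  have hpos : ∀ s, 0 < s → s ≤ t → ∫ ω, auxe (L (bridgeHatB ν T x y (fun u => B u ω) t -
      bridgeHatB ν T x y (fun u => B u ω) s)) ∂P =
      Complex.exp ((-((t - s) * auxq L / 2) : ℝ)) := by
    intro s hs hst
    have := aux_hat_law_pos hB hT x y hs hst ht L 0
    simpa [auxq] using this
  rcases lt_or_eq_of_le hs with hs | rfl
  · exact hpos s hs hst
  rcases lt_or_eq_of_le hst with ht0 | rfl
  swap
  · simp [auxe]
  have hsn : ∀ n : ℕ, 0 < t / (n + 1 : ℝ) ∧ t / (n + 1 : ℝ) ≤ t := by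
    intro n
    refine ⟨by positivity, div_le_self ht0.le ?_⟩
    have : (0 : ℝ) ≤ n := by positivity
    linarith
  have hs0 : Tendsto (fun n : ℕ => t / (n + 1 : ℝ)) atTop (𝓝 0) :=
    by simpa [div_eq_mul_inv] using
      (tendsto_one_div_add_atTop_nhds_zero_nat (𝕜 := ℝ)).const_mul t
  have hlim := aux_tendsto_cf (P := P) (Z := fun _ => 1)
    (X := fun (n : ℕ) ω => L (bridgeHatB ν T x y (fun u => B u ω) t -
      bridgeHatB ν T x y (fun u => B u ω) (t / (n + 1 : ℝ))))
    (Y := fun ω => L (bridgeHatB ν T x y (fun u => B u ω) t -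
      bridgeHatB ν T x y (fun u => B u ω) 0)) ?_ measurable_const (by simp) ?_
  rotate_left
  · intro n
    exact L.continuous.measurable.comp
      ((aux_D_meas hB hT x y (hsn n).1.le (hsn n).2 ht).mono (F.le _) le_rfl)
  · intro ω
    refine (L.continuous.tendsto _).comp (tendsto_const_nhds.sub ?_)
    have h1 := aux_hat_cont hT (x := x) (y := y) (hB.contPaths ω) 0 ⟨le_rfl, hT⟩
    refine h1.tendsto.comp (tendsto_nhdsWithin_iff.2 ⟨hs0, Eventually.of_forall fun n => ?_⟩)
    exact ⟨(hsn n).1.le, (hsn n).2.trans_lt ht⟩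
  simp only [mul_one] at hlim
  refine tendsto_nhds_unique hlim ?_
  have hc : Continuous (fun z : ℝ => Complex.exp ((-((t - z) * auxq L / 2) : ℝ))) := by fun_prop
  refine ((hc.tendsto _).comp hs0).congr fun n => ?_
  exact (hpos _ (hsn n).1 (hsn n).2).symm

lemma aux_indep_bb (hB : IsBrownianMotion P ν F B) {T s t : ℝ} (hT : 0 < T) (x y : Fin ν → ℝ)
    (hs : 0 ≤ s) (hst : s ≤ t) (ht : t < T) :
    IndepFun (fun ω => bridgeHatB ν T x y (fun u => B u ω) t -
      bridgeHatB ν T x y (fun u => B u ω) s)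
      (fun ω => bridgeBB ν T x y (fun u => B u ω) (T - s)) P := by
  have hDm := (aux_D_meas hB hT x y hs hst ht).mono (F.le _) le_rfl
  rcases lt_or_eq_of_le hs with hs | rfl
  · have hu : T - s < T := by linarith
    have hM := (aux_MM_meas hB (T := T) (u := T - s) (by linarith) hu).mono (F.le _) le_rfl
    have h := aux_indep_of_cf (P := P) hDm hM ?_
    · simp only [aux_bb_eq hu]
      exact h.comp (φ := id) (ψ := fun z => ((T - s) / T) • y + ((T - (T - s)) / T) • x +
        (T - (T - s)) • z) measurable_id (by fun_prop)
    · intro L L'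
      have h0 := aux_hat_law_pos hB hT x y hs hst ht 0 L'
      simp only [zero_apply, zero_add] at h0
      rw [aux_hat_law_pos hB hT x y hs hst ht, aux_hat_cf hB hT x y hs.le hst ht, h0,
        ← Complex.exp_add, ← Complex.ofReal_add]
      congr 2
      have : auxq (0 : StrongDual ℝ (Fin ν → ℝ)) = 0 := by simp [auxq]
      rw [this]; ring
  · have e : ∀ ω, bridgeBB ν T x y (fun u => B u ω) (T - 0) = y := by
      intro ω; rw [sub_zero, aux_bb_T]
    simp only [e]
    exact indepFun_const_right _ _

lemma aux_comap_le (hB : IsBrownianMotion P ν F B) (r s : ℝ) :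
    MeasurableSpace.comap (fun ω => B r ω - B s ω) inferInstance ≤ m :=
  ((aux_B_meas' hB r).sub (aux_B_meas' hB s)).comap_le

lemma aux_future_fin (hB : IsBrownianMotion P ν F B) {T : ℝ} (I : Finset ℝ) :
    ∀ u : ℝ, 0 ≤ u → u ≤ T → (∀ r ∈ I, u ≤ r ∧ r ≤ T) →
      Indep (MeasurableSpace.comap (fun ω => B T ω - B u ω) inferInstance ⊔
        ⨆ r ∈ I, MeasurableSpace.comap (fun ω => B T ω - B r ω) inferInstance) (F u) P := by
  induction I using Finset.induction_on_min with
  | empty =>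
    intro u hu huT _
    simpa using hB.indepIncr u T hu huT
  | insert a J haJ ih =>
    intro u hu huT hI
    have ha := hI a (Finset.mem_insert_self _ _)
    have h1 := ih a (hu.trans ha.1) ha.2
      fun r hr => ⟨(haJ r hr).le, (hI r (Finset.mem_insert_of_mem hr)).2⟩
    have h2 := hB.indepIncr u a hu ha.1
    rw [Finset.iSup_insert]
    have h3 := aux_indep_sup (P := P) (aux_comap_le hB a u) (sup_le (aux_comap_le hB T a)
      (iSup_le fun r => iSup_le fun (_ : r ∈ J) => aux_comap_le hB T r)) (F.le u) h2
      (indep_of_indep_of_le_right h1 (sup_le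
        (Measurable.comap_le ((hB.adapted a).sub (aux_B_meas hB ha.1))) (F.mono ha.1)))
    refine indep_of_indep_of_le_left h3 (sup_le ?_ le_sup_right)
    have e : (fun ω => B T ω - B u ω) = fun ω => (B T ω - B a ω) + (B a ω - B u ω) := by
      ext ω i; simp
    rw [e]
    refine Measurable.comap_le (Measurable.add ?_ ?_)
    · exact (comap_measurable _).mono (le_trans le_sup_left le_sup_right) le_rfl
    · exact (comap_measurable _).mono le_sup_left le_rfl

lemma aux_future (hB : IsBrownianMotion P ν F B) {T u : ℝ} (hu : 0 ≤ u) (huT : u ≤ T) :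
    Indep (⨆ r ∈ Set.Icc u T, MeasurableSpace.comap (fun ω => B T ω - B r ω) inferInstance)
      (F u) P := by
  classical
  rw [iSup_eq_iSup_finset]
  refine indep_iSup_of_directed_le ?_ ?_ (F.le u) ?_
  · intro I
    have h := aux_future_fin hB (T := T) (I.filter (· ∈ Set.Icc u T)) u hu huT
      fun r hr => (Finset.mem_filter.1 hr).2
    refine indep_of_indep_of_le_left h (le_trans ?_ le_sup_right)
    refine iSup_le fun r => iSup_le fun hr => iSup_le fun hr' => ?_
    exact le_iSup₂_of_le r (Finset.mem_filter.2 ⟨hr, hr'⟩) le_rfl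
  · intro I
    exact iSup_le fun r => iSup_le fun hr => iSup_le fun hr' => aux_comap_le hB _ _
  · refine Monotone.directed_le ?_
    intro I J hIJ
    exact biSup_mono fun r hr => hIJ hr

lemma aux_H_bb {T s : ℝ} (x y : Fin ν → ℝ) :
    Measurable[revFiltration P ν T x y B s]
      (fun ω => bridgeBB ν T x y (fun u => B u ω) (T - s)) := by
  refine (comap_measurable _).mono ?_ le_rfl
  exact le_trans le_sup_left le_sup_left

lemma aux_H_B {T s r : ℝ} (x y : Fin ν → ℝ) (hr : r ∈ Set.Icc (T - s) T) :
    Measurable[revFiltration P ν T x y B s] (fun ω => B T ω - B r ω) := by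
  refine (comap_measurable _).mono ?_ le_rfl
  refine le_trans (le_trans ?_ le_sup_right) le_sup_left
  exact le_iSup₂_of_le r hr le_rfl

lemma aux_H_bb' (hB : IsBrownianMotion P ν F B) {T s t : ℝ} (x y : Fin ν → ℝ) (hs : 0 ≤ s)
    (hst : s ≤ t) (ht : t ≤ T) :
    Measurable[revFiltration P ν T x y B t]
      (fun ω => bridgeBB ν T x y (fun u => B u ω) (T - s)) := by
  rcases lt_or_eq_of_le hs with hs | rfl
  swap
  · simp only [sub_zero, aux_bb_T]; exact measurable_const
  set u := T - t with hu
  set v := T - s with hv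
  have hu0 : 0 ≤ u := by linarith
  have huv : u ≤ v := by linarith
  have hvT : v < T := by linarith
  have huT : u < T := by linarith
  have hincr : ∀ r ∈ Set.Icc u v, Measurable[revFiltration P ν T x y B t]
      (fun ω => B r ω - B u ω) := by
    intro r hr
    have h1 := aux_H_B (P := P) (B := B) (s := t) x y (T := T) (r := u) ⟨le_rfl, by linarith⟩
    have h2 := aux_H_B (P := P) (B := B) (s := t) x y (T := T) (r := r) ⟨hr.1, by linarith [hr.2]⟩
    convert h1.sub h2 using 1
    ext ω i; simp
  have hMu : ∀ ω, auxMM ν T (fun r => B r ω) u = (T - u)⁻¹ •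
      (bridgeBB ν T x y (fun r => B r ω) u - ((u / T) • y + ((T - u) / T) • x)) := by
    intro ω
    rw [aux_bb_eq huT, add_sub_cancel_left, smul_smul, inv_mul_cancel₀ (by linarith), one_smul]
  have hform : ∀ ω, bridgeBB ν T x y (fun r => B r ω) v =
      ((v / T) • y + ((T - v) / T) • x) + (T - v) • (((T - v)⁻¹ • (B v ω - B u ω)
        - ∫ r in u..v, ((T - r) ^ 2)⁻¹ • (B r ω - B u ω)) + (T - u)⁻¹ •
      (bridgeBB ν T x y (fun r => B r ω) u - ((u / T) • y + ((T - u) / T) • x))) := by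
    intro ω
    have h := aux_MM_sub' (hB.contPaths ω) hu0 huv hvT (B u ω)
    simp only [sub_self, smul_zero, sub_zero] at h
    rw [aux_bb_eq hvT, ← hMu, ← h, sub_add_cancel]
  simp only [hform]
  refine measurable_const.add (Measurable.const_smul (Measurable.add (Measurable.sub
    ((hincr v ⟨huv, le_rfl⟩).const_smul ((T - v)⁻¹)) ?_) ?_) (T - v))
  · refine @aux_meas_int Ω (revFiltration P ν T x y B t) ν u v huv
      (fun r ω => ((T - r) ^ 2)⁻¹ • (B r ω - B u ω)) ?_ ?_
    · intro r hr
      exact (hincr r hr).const_smul (((T - r) ^ 2)⁻¹)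
    · intro ω
      exact aux_cont_g ((hB.contPaths ω).sub continuousOn_const) hu0 hvT
  · exact ((aux_H_bb x y).sub measurable_const).const_smul ((T - u)⁻¹)

end auxE

/-- Time reversal of the Brownian bridge: `(H_s)_{s∈[0,T]}` is a
filtration, `B̂` is adapted to it with continuous paths on `[0,T)` and `B̂_0 = 0` a.s.,
`B̂` is an `(H_s)`-Brownian motion (independent, centered Gaussian increments with
covariance `(t−s)·Id`), and `P`-a.s. the time-reversed bridge satisfies
`b_{T−s} = y + B̂_s + ∫₀ˢ (x − b_{T−r})/(T−r) dr` for all `s ∈ [0,T)`; i.e.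
`(b_{T−s})_s` is a Brownian bridge from `y` to `x` in time `T` driven by `B̂`. -/
theorem statement14 {Ω : Type*} [m : MeasurableSpace Ω] (P : Measure Ω)
    [IsProbabilityMeasure P] (ν : ℕ) (hν : 0 < ν) (F : Filtration ℝ m)
    (B : ℝ → Ω → Fin ν → ℝ) (hB : IsBrownianMotion P ν F B) (T : ℝ) (hT : 0 < T)
    (x y : Fin ν → ℝ) :
    (∀ s t : ℝ, 0 ≤ s → s ≤ t → t ≤ T →
      revFiltration P ν T x y B s ≤ revFiltration P ν T x y B t) ∧
    (∀ s ∈ Set.Ico (0 : ℝ) T,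
      Measurable[revFiltration P ν T x y B s]
        (fun ω => bridgeHatB ν T x y (fun u => B u ω) s)) ∧
    (∀ ω, ContinuousOn (fun s => bridgeHatB ν T x y (fun u => B u ω) s) (Set.Ico 0 T)) ∧
    (∀ᵐ ω ∂P, bridgeHatB ν T x y (fun u => B u ω) 0 = 0) ∧
    (∀ s t : ℝ, 0 ≤ s → s ≤ t → t < T →
      Indep
        (MeasurableSpace.comap
          (fun ω =>
            bridgeHatB ν T x y (fun u => B u ω) t - bridgeHatB ν T x y (fun u => B u ω) s)
          inferInstance)
        (revFiltration P ν T x y B s) P ∧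
      Measure.map
          (fun ω =>
            bridgeHatB ν T x y (fun u => B u ω) t - bridgeHatB ν T x y (fun u => B u ω) s)
          P =
        Measure.pi fun _ : Fin ν => gaussianReal 0 (Real.toNNReal (t - s))) ∧
    (∀ᵐ ω ∂P, ∀ s ∈ Set.Ico (0 : ℝ) T,
      bridgeBB ν T x y (fun u => B u ω) (T - s) =
        y + bridgeHatB ν T x y (fun u => B u ω) s +
          ∫ r in (0 : ℝ)..s,
            (T - r)⁻¹ • (x - bridgeBB ν T x y (fun u => B u ω) (T - r))) := by
  have _ := hν
  refine ⟨?_, ?_, ?_, ?_, ?_, ?_⟩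
  · intro s t hs hst ht
    refine sup_le (sup_le (Measurable.comap_le (aux_H_bb' hB x y hs hst ht))
      (iSup₂_le fun r hr => ?_)) le_sup_right
    exact Measurable.comap_le (aux_H_B x y ⟨by linarith [hr.1], hr.2⟩)
  · intro s hs
    unfold bridgeHatB
    refine ((aux_H_bb x y).sub measurable_const).add ?_
    refine @aux_meas_int Ω (revFiltration P ν T x y B s) ν (T - s) T (by linarith [hs.1]) _ ?_ ?_
    · intro r hr
      have h := aux_H_bb' hB (T := T) (s := T - r) (t := s) x y (by linarith [hr.2])
        (by linarith [hr.1]) hs.2.le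
      rw [sub_sub_cancel] at h
      exact (h.sub measurable_const).const_smul (r⁻¹)
    · intro ω
      exact aux_hat_int hT (hB.contPaths ω) (by linarith [hs.2]) le_rfl
  · intro ω
    exact aux_hat_cont hT (hB.contPaths ω)
  · refine Filter.Eventually.of_forall fun ω => ?_
    simp [bridgeHatB, aux_bb_T]
  · intro s t hs hst ht
    have hD := aux_D_meas hB hT x y hs hst ht
    have hDm := hD.mono (F.le _) le_rfl
    refine ⟨?_, aux_law_of_cf hDm (sub_nonneg.2 hst) (aux_hat_cf hB hT x y hs hst ht)⟩
    have hb := aux_bb_meas hB (T := T) (r := T - s) x y (by linarith) (by linarith)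
    have hbm := hb.mono (F.le _) le_rfl
    have hGm : (⨆ r ∈ Set.Icc (T - s) T,
        MeasurableSpace.comap (fun ω => B T ω - B r ω) inferInstance) ≤ m :=
      iSup₂_le fun r _ => aux_comap_le hB T r
    have hN : MeasurableSpace.generateFrom {A : Set Ω | P A = 0} ≤ m :=
      MeasurableSpace.generateFrom_le fun A hA => F.le 0 _ (hB.complete 0 A hA)
    have h1 := aux_indep_sup (P := P) hbm.comap_le hGm hDm.comap_le
      (IndepFun_iff_Indep _ _ _ |>.1 (aux_indep_bb hB hT x y hs hst ht)).symm
      (indep_of_indep_of_le_right (aux_future hB (by linarith) (by linarith))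
        (sup_le hb.comap_le hD.comap_le))
    have h2 := aux_indep_sup (P := P) (sup_le hbm.comap_le hGm) hN hDm.comap_le h1
      (aux_indep_null hN (sup_le (sup_le hbm.comap_le hGm) hDm.comap_le))
    exact h2.symm
  · exact Filter.Eventually.of_forall fun ω s _ => aux_hat_sde
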